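/- (Generalized Edwards theorem.) In the Edwards setting, let g : X → (−∞, +∞] be lower semicontinuous and bounded from below. Then for every x ∈ X with S_x(−𝟙) > −∞ one has S_x(g) = I_x(g), and moreover S_x(g) = inf{ ∫ g dμ : μ ∈ C_x^F }, i.e. it suffices to take the infimum over measures in C_x^F. -/

import Mathlib

open MeasureTheory Filter Set
open scoped ENNReal

noncomputable section

/-- The nonnegative part of an extended real, as an element of `ℝ≥0∞`. -/
def erealToENNReal (x : EReal) : ℝ≥0∞ := if x = ⊤ then ⊤ else ENNReal.ofReal x.toReal

/-- The integral of an `EReal`-valued function: upper Lebesgue integral of the positive part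
minus that of the negative part. -/
def erealIntegral {α : Type*} [MeasurableSpace α] (μ : Measure α) (f : α → EReal) : EReal :=
  ((∫⁻ a, erealToENNReal (f a) ∂μ : ℝ≥0∞) : EReal) -
    ((∫⁻ a, erealToENNReal (-(f a)) ∂μ : ℝ≥0∞) : EReal)

/-- The Edwards setting: `F` is a cone of upper bounded, upper semicontinuous functions on `X`
with values in `[-∞, ∞)` (not necessarily containing the zero function). -/
def IsEdwardsCone {X : Type*} [TopologicalSpace X] (F : Set (X → EReal)) : Prop :=
  (∀ u ∈ F, UpperSemicontinuous u) ∧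
  (∀ u ∈ F, ∃ K : ℝ, ∀ x, u x ≤ (K : EReal)) ∧
  (∀ u ∈ F, ∀ c : ℝ, 0 < c → (fun x => (c : EReal) * u x) ∈ F) ∧
  (∀ u ∈ F, ∀ v ∈ F, (fun x => u x + v x) ∈ F)

/-- `M_x^F`: the positive (Borel) measures `μ` on `X` with `u(x) ≤ ∫ u dμ` for all `u ∈ F`. -/
def edwardsM {X : Type*} [MeasurableSpace X] (F : Set (X → EReal)) (x : X) :
    Set (Measure X) :=
  { μ | ∀ u ∈ F, u x ≤ erealIntegral μ u }

/-- `S_x(g) = sup { u(x) : u ∈ F, u ≤ g }` (`= -∞`, i.e. `sSup ∅`, if no `u ∈ F` satisfies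
`u ≤ g`). -/
def edwardsS {X : Type*} (F : Set (X → EReal)) (x : X) (g : X → EReal) : EReal :=
  sSup { t : EReal | ∃ u ∈ F, (∀ y, u y ≤ g y) ∧ t = u x }

/-- `I_x(g) = inf { ∫ g dμ : μ ∈ M_x^F }`. -/
def edwardsI {X : Type*} [MeasurableSpace X] (F : Set (X → EReal)) (x : X)
    (g : X → EReal) : EReal :=
  sInf { t : EReal | ∃ μ ∈ edwardsM F x, t = erealIntegral μ g }

/-- `C_x^F = { μ ∈ M_x^F : μ(X) ≤ -S_x(-𝟙) }`. -/
def edwardsC {X : Type*} [MeasurableSpace X] (F : Set (X → EReal)) (x : X) :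
    Set (Measure X) :=
  { μ | μ ∈ edwardsM F x ∧
      ((μ Set.univ : ℝ≥0∞) : EReal) ≤ -(edwardsS F x (fun _ => (-1 : EReal))) }

/-!
On continuous functions the envelope `S_x` is superlinear, and it is finite because
`-∞ < S_x(φ) ≤ φ(x)`. If `S_x(g) ≤ s`, then `S_x ≤ s` on the convex set of continuous minorants of
`g`, so by the Mazur–Orlicz theorem some linear functional `Λ ≥ S_x` on `C(X, ℝ)` is at most `s` on
this set. Since `S_x(φ) ≥ S_x(0) = 0` for `φ ≥ 0`, `Λ` is positive, hence is integration against a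
regular measure `μ`.

For a regular measure the integral of a lower semicontinuous function is the supremum of the
integrals of its continuous minorants: Vitali–Carathéodory provides an upper semicontinuous function
strictly below with almost the same integral, and a continuous function can be inserted between the
two. Applied to `g` this gives `∫ g dμ ≤ s`, and applied to `-u` for `u ∈ F` it gives
`u(x) ≤ ∫ u dμ`; evaluating at `-𝟙` bounds the mass of `μ`.
-/

open scoped CompactlySupported Pointwise Topology

section Superlinear

variable {E : Type*} [AddCommGroup E] [Module ℝ E]

/-- Superlinear functionals: the concave counterpart of the sublinear functionals of the
Hahn–Banach theorem. -/
structure IsSuperlinear (q : E → ℝ) : Prop where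
  map_smul : ∀ c : ℝ, 0 < c → ∀ φ, q (c • φ) = c * q φ
  add_le_map_add : ∀ φ ψ, q φ + q ψ ≤ q (φ + ψ)

/-- The upper bounds at `φ` of the Mazur–Orlicz theorem: a linear functional `Λ ≥ q` with `Λ ≤ s`
on `B` satisfies `Λ φ = t Λ b - Λ (t b - φ) ≤ t s - q (t b - φ)`. The infimum of these bounds is the
sublinear functional to which Hahn–Banach is applied; the set is taken upward closed so that it is
compatible with sums. -/
def mazurOrliczBounds (q : E → ℝ) (B : Set E) (s : ℝ) (φ : E) : Set ℝ :=
  { r | ∃ t : ℝ, 0 ≤ t ∧ ∃ b ∈ B, t * s - q (t • b - φ) ≤ r }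

namespace IsSuperlinear

variable {q : E → ℝ} {B : Set E} {s : ℝ}

theorem map_zero (hq : IsSuperlinear q) : q 0 = 0 := by
  have h := hq.map_smul 2 two_pos 0
  rw [smul_zero] at h
  linarith

theorem le_of_mem_mazurOrliczBounds (hq : IsSuperlinear q) (hs : ∀ b ∈ B, q b ≤ s) {φ : E} {r : ℝ}
    (hr : r ∈ mazurOrliczBounds q B s φ) : q φ ≤ r := by
  obtain ⟨t, ht, b, hb, hr⟩ := hr
  have hadd : q (t • b - φ) + q φ ≤ q (t • b) := by
    simpa using hq.add_le_map_add (t • b - φ) φ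
  have htb : q (t • b) ≤ t * s := by
    rcases ht.eq_or_lt with rfl | ht
    · simp [hq.map_zero]
    · rw [hq.map_smul t ht]
      exact mul_le_mul_of_nonneg_left (hs b hb) ht.le
  linarith

theorem mazurOrliczBounds_add_subset (hq : IsSuperlinear q) (hB : Convex ℝ B) (φ ψ : E) :
    mazurOrliczBounds q B s φ + mazurOrliczBounds q B s ψ ⊆ mazurOrliczBounds q B s (φ + ψ) := by
  rintro _ ⟨r, ⟨t, ht, b, hb, hr⟩, r', ⟨t', ht', b', hb', hr'⟩, rfl⟩
  obtain ⟨z, hz, hzb⟩ := hB.exists_mem_add_smul_eq hb hb' ht ht'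
  refine ⟨t + t', add_nonneg ht ht', z, hz, ?_⟩
  have hadd := hq.add_le_map_add (t • b - φ) (t' • b' - ψ)
  rw [sub_add_sub_comm, ← hzb] at hadd
  linarith

theorem smul_mazurOrliczBounds (hq : IsSuperlinear q) {c : ℝ} (hc : 0 < c) (φ : E) :
    c • mazurOrliczBounds q B s φ = mazurOrliczBounds q B s (c • φ) := by
  have hsub : ∀ {c : ℝ}, 0 < c → ∀ φ,
      c • mazurOrliczBounds q B s φ ⊆ mazurOrliczBounds q B s (c • φ) := by
    rintro c hc φ _ ⟨r, ⟨t, ht, b, hb, hr⟩, rfl⟩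
    refine ⟨c * t, by positivity, b, hb, ?_⟩
    rw [mul_smul, ← smul_sub, hq.map_smul c hc, mul_assoc, ← mul_sub]
    exact mul_le_mul_of_nonneg_left hr hc.le
  refine (hsub hc φ).antisymm ?_
  rw [Set.subset_smul_set_iff₀ hc.ne']
  simpa [smul_smul, hc.ne'] using hsub (inv_pos.2 hc) (c • φ)

/-- The Mazur–Orlicz theorem. -/
theorem exists_linearMap_ge_of_forall_le (hq : IsSuperlinear q) (hB : Convex ℝ B)
    (hne : B.Nonempty) (hs : ∀ b ∈ B, q b ≤ s) :
    ∃ Λ : E →ₗ[ℝ] ℝ, (∀ φ, q φ ≤ Λ φ) ∧ ∀ b ∈ B, Λ b ≤ s := by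
  obtain ⟨b₀, hb₀⟩ := hne
  set A := mazurOrliczBounds q B s
  have hbdd : ∀ φ, BddBelow (A φ) := fun φ => ⟨q φ, fun _ => hq.le_of_mem_mazurOrliczBounds hs⟩
  have hmem : ∀ φ, -q (-φ) ∈ A φ := fun φ => ⟨0, le_rfl, b₀, hb₀, by simp⟩
  have hadd : ∀ φ ψ, sInf (A (φ + ψ)) ≤ sInf (A φ) + sInf (A ψ) := fun φ ψ => by
    rw [← csInf_add ⟨_, hmem φ⟩ (hbdd φ) ⟨_, hmem ψ⟩ (hbdd ψ)]
    exact csInf_le_csInf (hbdd _) (Set.Nonempty.add ⟨_, hmem φ⟩ ⟨_, hmem ψ⟩)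
      (hq.mazurOrliczBounds_add_subset hB φ ψ)
  have hsmul : ∀ c : ℝ, 0 < c → ∀ φ, sInf (A (c • φ)) = c * sInf (A φ) := fun c hc φ => by
    rw [← smul_eq_mul, ← Real.sInf_smul_of_nonneg hc.le, hq.smul_mazurOrliczBounds hc]
  have hzero : 0 ≤ sInf (A 0) := le_csInf ⟨_, hmem 0⟩ fun _ hr =>
    hq.map_zero.ge.trans (hq.le_of_mem_mazurOrliczBounds hs hr)
  obtain ⟨Λ, -, hΛ⟩ := exists_extension_of_le_sublinear ⟨⊥, 0⟩ (fun φ => sInf (A φ)) hsmul hadd (by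
    rintro ⟨φ, hφ⟩
    obtain rfl : φ = 0 := hφ
    exact hzero)
  refine ⟨Λ, fun φ => ?_, fun b hb => (hΛ b).trans (csInf_le (hbdd b) ?_)⟩
  · have h := (hΛ (-φ)).trans (csInf_le (hbdd _) (hmem _))
    rw [map_neg, neg_neg] at h
    exact neg_le_neg_iff.1 h
  · exact ⟨1, zero_le_one, b, hb, by simp [hq.map_zero]⟩

end IsSuperlinear

end Superlinear

section Integral

variable {α : Type*} [MeasurableSpace α] {μ : Measure α}

theorem erealToENNReal_eq_toENNReal : erealToENNReal = EReal.toENNReal := rfl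

theorem erealIntegral_mono {f g : α → EReal} (h : ∀ a, f a ≤ g a) :
    erealIntegral μ f ≤ erealIntegral μ g := by
  simp only [erealIntegral, erealToENNReal_eq_toENNReal]
  refine EReal.sub_le_sub (EReal.coe_ennreal_le_coe_ennreal_iff.2 (lintegral_mono fun a => ?_))
    (EReal.coe_ennreal_le_coe_ennreal_iff.2 (lintegral_mono fun a => ?_))
  · exact EReal.toENNReal_le_toENNReal (h a)
  · exact EReal.toENNReal_le_toENNReal (EReal.neg_le_neg_iff.2 (h a))

theorem erealIntegral_coe {f : α → ℝ} (hf : Integrable f μ) :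
    erealIntegral μ (fun a => (f a : EReal)) = ((∫ a, f a ∂μ : ℝ) : EReal) := by
  have hpos : ∫⁻ a, ENNReal.ofReal (f a) ∂μ ≠ ⊤ := hf.lintegral_lt_top.ne
  have hneg : ∫⁻ a, ENNReal.ofReal (-f a) ∂μ ≠ ⊤ := hf.neg.lintegral_lt_top.ne
  rw [integral_eq_lintegral_pos_part_sub_lintegral_neg_part hf]
  simp only [erealIntegral, erealToENNReal_eq_toENNReal, ← EReal.coe_neg,
    EReal.real_coe_toENNReal, EReal.coe_sub]
  rw [← EReal.coe_ennreal_toReal hpos, ← EReal.coe_ennreal_toReal hneg]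

variable {g : α → EReal}

theorem lintegral_toENNReal_neg_ne_top [IsFiniteMeasure μ] {K : ℝ} (hK : ∀ a, (K : EReal) ≤ g a) :
    ∫⁻ a, (-g a).toENNReal ∂μ ≠ ⊤ := by
  have hle : ∀ a, (-g a).toENNReal ≤ ENNReal.ofReal (-K) := fun a => by
    rw [← EReal.real_coe_toENNReal, EReal.coe_neg]
    exact EReal.toENNReal_le_toENNReal (EReal.neg_le_neg_iff.2 (hK a))
  exact ((lintegral_mono hle).trans_lt (by
    simpa using ENNReal.mul_lt_top ENNReal.ofReal_lt_top (measure_lt_top μ univ))).ne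

theorem erealIntegral_neg (hg : ∫⁻ a, (-g a).toENNReal ∂μ ≠ ⊤) :
    erealIntegral μ (fun a => -g a) = -erealIntegral μ g := by
  simp only [erealIntegral, erealToENNReal_eq_toENNReal, neg_neg]
  rw [EReal.neg_sub (Or.inl (EReal.coe_ennreal_ne_bot _)) (Or.inr (by simpa using hg)),
    sub_eq_add_neg, add_comm]

theorem tendsto_erealIntegral_min_natCast (hg : Measurable g)
    (hneg : ∫⁻ a, (-g a).toENNReal ∂μ ≠ ⊤) :
    Tendsto (fun n : ℕ => erealIntegral μ fun a => min (g a) (n : ℝ)) atTop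
      (𝓝 (erealIntegral μ g)) := by
  have hlim : ∀ a, Tendsto (fun n : ℕ => min (g a) ((n : ℝ) : EReal)) atTop (𝓝 (g a)) := fun a => by
    have htop : Tendsto (fun n : ℕ => ((n : ℝ) : EReal)) atTop (𝓝 ⊤) :=
      EReal.tendsto_coe_nhds_top_iff.2 tendsto_natCast_atTop_atTop
    simpa only [min_top_right] using tendsto_const_nhds.min htop
  have hpos_lim : Tendsto (fun n : ℕ => ∫⁻ a, (min (g a) ((n : ℝ) : EReal)).toENNReal ∂μ) atTop
      (𝓝 (∫⁻ a, (g a).toENNReal ∂μ)) := by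
    refine lintegral_tendsto_of_tendsto_of_monotone
      (fun n => (hg.min measurable_const).ereal_toENNReal.aemeasurable)
      (.of_forall fun a m n hmn => EReal.toENNReal_le_toENNReal ?_)
      (.of_forall fun a => (EReal.continuous_toENNReal.tendsto _).comp (hlim a))
    gcongr
  have hneg_eq : ∀ (n : ℕ) a, (-min (g a) ((n : ℝ) : EReal)).toENNReal = (-g a).toENNReal :=
    fun n a => by
      rcases le_total (g a) (n : ℝ) with h | h
      · rw [min_eq_left h]
      · have hn : (0 : EReal) ≤ (n : ℝ) := by exact_mod_cast n.cast_nonneg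
        rw [min_eq_right h, EReal.toENNReal_of_nonpos (by simp),
          EReal.toENNReal_of_nonpos (by simpa using hn.trans h)]
  simp only [erealIntegral, erealToENNReal_eq_toENNReal, hneg_eq, sub_eq_add_neg]
  exact (EReal.continuousAt_add (Or.inr (by simpa using hneg))
    (Or.inl (EReal.coe_ennreal_ne_bot _))).tendsto.comp
    (((continuous_coe_ennreal_ereal.tendsto _).comp hpos_lim).prodMk_nhds tendsto_const_nhds)

end Integral

section ContinuousMinorants

variable {X : Type*} [TopologicalSpace X]

theorem exists_continuousMap_forall_lt_and_lt [NormalSpace X] [ParacompactSpace X]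
    {f g : X → EReal} (hf : UpperSemicontinuous f) (hg : LowerSemicontinuous g)
    (hfg : ∀ y, f y < g y) : ∃ φ : C(X, ℝ), ∀ y, f y < φ y ∧ (φ y : EReal) < g y := by
  refine exists_continuous_forall_mem_convex_of_local_const
    (t := fun y => { r : ℝ | f y < r ∧ (r : EReal) < g y }) (fun y => ?_) fun y => ?_
  · exact OrdConnected.convex ⟨fun a ha b hb c hc =>
      ⟨ha.1.trans_le (EReal.coe_le_coe_iff.2 hc.1), (EReal.coe_le_coe_iff.2 hc.2).trans_lt hb.2⟩⟩
  · obtain ⟨c, hfc, hcg⟩ := EReal.lt_iff_exists_real_btwn.1 (hfg y)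
    exact ⟨c, (hf y c hfc).and (hg y c hcg)⟩

theorem convex_setOf_continuousMap_le (g : X → EReal) :
    Convex ℝ { φ : C(X, ℝ) | ∀ y, (φ y : EReal) ≤ g y } := fun φ hφ ψ hψ a b ha hb hab y => by
  have hconv : Convex ℝ { r : ℝ | (r : EReal) ≤ g y } :=
    (IsLowerSet.ordConnected fun _ _ h hr => (EReal.coe_le_coe_iff.2 h).trans hr).convex
  exact hconv (hφ y) (hψ y) ha hb hab

variable [T2Space X] [CompactSpace X] [MeasurableSpace X] [BorelSpace X]

theorem exists_continuousMap_le_lt_integral {μ : Measure X} [IsFiniteMeasure μ] [μ.WeaklyRegular]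
    {f : X → ℝ} (hf : Integrable f μ) {g : X → EReal} (hg : LowerSemicontinuous g)
    (hfg : ∀ y, (f y : EReal) ≤ g y) {a : ℝ} (ha : a < ∫ y, f y ∂μ) :
    ∃ φ : C(X, ℝ), (∀ y, (φ y : EReal) ≤ g y) ∧ a < ∫ y, φ y ∂μ := by
  obtain ⟨ψ, hψf, hψ, hψint, hψbot, hψa⟩ :=
    exists_upperSemicontinuous_lt_integral_gt f hf (sub_pos.2 ha)
  obtain ⟨φ, hφ⟩ := exists_continuousMap_forall_lt_and_lt hψ hg fun y => (hψf y).trans_le (hfg y)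
  refine ⟨φ, fun y => (hφ y).2.le, ?_⟩
  have hφint : Integrable φ μ :=
    φ.continuous.integrable_of_hasCompactSupport (HasCompactSupport.of_compactSpace φ)
  have hle : ∫ y, (ψ y).toReal ∂μ ≤ ∫ y, φ y ∂μ := by
    refine integral_mono_ae hψint hφint ?_
    filter_upwards [hψbot] with y hy
    exact EReal.toReal_le_toReal (hφ y).1.le hy.ne' (EReal.coe_ne_top _)
  linarith

theorem erealIntegral_le_of_forall_continuousMap_le {μ : Measure X} [IsFiniteMeasure μ]
    [μ.WeaklyRegular] {g : X → EReal} (hg : LowerSemicontinuous g) {K : ℝ}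
    (hK : ∀ y, (K : EReal) ≤ g y) {s : EReal}
    (hs : ∀ φ : C(X, ℝ), (∀ y, (φ y : EReal) ≤ g y) → ((∫ y, φ y ∂μ : ℝ) : EReal) ≤ s) :
    erealIntegral μ g ≤ s := by
  refine le_of_tendsto' (tendsto_erealIntegral_min_natCast hg.measurable
    (lintegral_toENNReal_neg_ne_top hK)) fun n => ?_
  set f : X → ℝ := fun y => (min (g y) ((n : ℝ) : EReal)).toReal
  have hlow : ∀ y, ((min K n : ℝ) : EReal) ≤ min (g y) ((n : ℝ) : EReal) := fun y => by
    rw [EReal.coe_strictMono.monotone.map_min]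
    exact min_le_min_right _ (hK y)
  have hcoe : ∀ y, min (g y) ((n : ℝ) : EReal) = f y := fun y =>
    (EReal.coe_toReal (ne_top_of_le_ne_top (EReal.coe_ne_top _) (min_le_right _ _))
      (ne_bot_of_le_ne_bot (EReal.coe_ne_bot _) (hlow y))).symm
  have hf : Integrable f μ := by
    refine .of_mem_Icc (min K n) n (hg.measurable.min measurable_const).ereal_toReal.aemeasurable
      (.of_forall fun y => ⟨?_, ?_⟩)
    · exact EReal.coe_le_coe_iff.1 ((hlow y).trans_eq (hcoe y))
    · exact EReal.coe_le_coe_iff.1 ((hcoe y).symm.trans_le (min_le_right _ _))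
  simp only [hcoe]
  rw [erealIntegral_coe hf]
  refine EReal.ge_of_forall_gt_iff_ge.1 fun a ha => ?_
  obtain ⟨φ, hφg, hφ⟩ := exists_continuousMap_le_lt_integral hf hg
    (fun y => (hcoe y).symm.trans_le (min_le_left _ _)) (EReal.coe_lt_coe_iff.1 ha)
  exact (EReal.coe_le_coe_iff.2 hφ.le).trans (hs φ hφg)

theorem exists_regular_measure_integral_eq (Λ : C(X, ℝ) →ₗ[ℝ] ℝ) (hΛ : ∀ φ, 0 ≤ φ → 0 ≤ Λ φ) :
    ∃ μ : Measure X, IsFiniteMeasure μ ∧ μ.Regular ∧ ∀ φ : C(X, ℝ), ∫ y, φ y ∂μ = Λ φ := by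
  let toContinuousMap : C_c(X, ℝ) →ₗ[ℝ] C(X, ℝ) :=
    { toFun := (↑), map_add' := fun _ _ => rfl, map_smul' := fun _ _ => rfl }
  let Λc : C_c(X, ℝ) →ₚ[ℝ] ℝ := .mk₀ (Λ ∘ₗ toContinuousMap) fun φ hφ => hΛ φ hφ
  exact ⟨RealRMK.rieszMeasure Λc, inferInstance, inferInstance, fun φ =>
    RealRMK.integral_rieszMeasure Λc (CompactlySupportedContinuousMap.continuousMapEquiv φ)⟩

end ContinuousMinorants

namespace IsEdwardsCone

variable {X : Type*} [TopologicalSpace X] {F : Set (X → EReal)} {u v : X → EReal}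

theorem upperSemicontinuous (hF : IsEdwardsCone F) (hu : u ∈ F) : UpperSemicontinuous u :=
  hF.1 u hu

theorem exists_forall_le (hF : IsEdwardsCone F) (hu : u ∈ F) : ∃ K : ℝ, ∀ y, u y ≤ (K : EReal) :=
  hF.2.1 u hu

theorem const_mul_mem (hF : IsEdwardsCone F) (hu : u ∈ F) {c : ℝ} (hc : 0 < c) :
    (fun y => (c : EReal) * u y) ∈ F :=
  hF.2.2.1 u hu c hc

theorem add_mem (hF : IsEdwardsCone F) (hu : u ∈ F) (hv : v ∈ F) : (fun y => u y + v y) ∈ F :=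
  hF.2.2.2 u hu v hv

end IsEdwardsCone

section Envelope

theorem ereal_coe_mul_le_iff {c : ℝ} (hc : 0 < c) {a b : EReal} :
    (c : EReal) * a ≤ b ↔ a ≤ ((c⁻¹ : ℝ) : EReal) * b := by
  rw [mul_comm, ← EReal.le_div_iff_mul_le (EReal.coe_pos.2 hc) (EReal.coe_ne_top _), EReal.coe_inv,
    EReal.div_eq_inv_mul]

theorem ereal_coe_inv_mul_le_iff {c : ℝ} (hc : 0 < c) {a b : EReal} :
    ((c⁻¹ : ℝ) : EReal) * a ≤ b ↔ a ≤ c * b := by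
  simpa only [inv_inv] using ereal_coe_mul_le_iff (inv_pos.2 hc)

variable {X : Type*} {F : Set (X → EReal)} {x : X} {g h : X → EReal}

theorem le_edwardsS {u : X → EReal} (hu : u ∈ F) (hug : ∀ y, u y ≤ g y) : u x ≤ edwardsS F x g :=
  le_sSup ⟨u, hu, hug, rfl⟩

theorem edwardsS_le_iff {t : EReal} :
    edwardsS F x g ≤ t ↔ ∀ u ∈ F, (∀ y, u y ≤ g y) → u x ≤ t :=
  ⟨fun h _ hu hug => (le_edwardsS hu hug).trans h,
    fun h => sSup_le fun _ ⟨u, hu, hug, ht⟩ => ht.trans_le (h u hu hug)⟩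

theorem edwardsS_mono (hgh : ∀ y, g y ≤ h y) : edwardsS F x g ≤ edwardsS F x h :=
  edwardsS_le_iff.2 fun _ hu hug => le_edwardsS hu fun y => (hug y).trans (hgh y)

theorem edwardsS_le_apply : edwardsS F x g ≤ g x :=
  edwardsS_le_iff.2 fun _ _ hug => hug x

variable [TopologicalSpace X]

theorem edwardsS_add_edwardsS_le (hF : IsEdwardsCone F) :
    edwardsS F x g + edwardsS F x h ≤ edwardsS F x (fun y => g y + h y) := by
  refine EReal.add_le_of_forall_lt fun a ha b hb => ?_
  obtain ⟨_, ⟨u, hu, hug, rfl⟩, hau⟩ := lt_sSup_iff.1 ha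
  obtain ⟨_, ⟨v, hv, hvh, rfl⟩, hbv⟩ := lt_sSup_iff.1 hb
  exact (add_le_add hau.le hbv.le).trans
    (le_edwardsS (hF.add_mem hu hv) fun y => add_le_add (hug y) (hvh y))

theorem edwardsS_const_mul (hF : IsEdwardsCone F) {c : ℝ} (hc : 0 < c) :
    edwardsS F x (fun y => (c : EReal) * g y) = c * edwardsS F x g := by
  refine le_antisymm (edwardsS_le_iff.2 fun u hu hug => ?_) ?_
  · exact (ereal_coe_inv_mul_le_iff hc).1
      (le_edwardsS (hF.const_mul_mem hu (inv_pos.2 hc)) fun y =>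
        (ereal_coe_inv_mul_le_iff hc).2 (hug y))
  · refine (ereal_coe_mul_le_iff hc).2 (edwardsS_le_iff.2 fun u hu hug => ?_)
    exact (ereal_coe_mul_le_iff hc).1 <|
      le_edwardsS (hF.const_mul_mem hu hc) fun y =>
        mul_le_mul_of_nonneg_left (hug y) (EReal.coe_nonneg.2 hc.le)

theorem bot_lt_edwardsS (hF : IsEdwardsCone F) (hx : ⊥ < edwardsS F x fun _ => (-1 : EReal))
    {K : ℝ} (hK : ∀ y, (K : EReal) ≤ g y) : ⊥ < edwardsS F x g := by
  have hc : 0 < |K| + 1 := by positivity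
  calc ⊥ < ((|K| + 1 : ℝ) : EReal) * edwardsS F x (fun _ => (-1 : EReal)) :=
        bot_lt_iff_ne_bot.2 ((EReal.mul_ne_bot _ _).2 ⟨.inl (EReal.coe_ne_bot _), .inr hx.ne',
          .inl (EReal.coe_ne_top _), .inl (EReal.coe_nonneg.2 hc.le)⟩)
    _ = edwardsS F x fun _ => ((|K| + 1 : ℝ) : EReal) * -1 := (edwardsS_const_mul hF hc).symm
    _ ≤ edwardsS F x g := edwardsS_mono fun y => le_trans ?_ (hK y)
  rw [mul_neg, mul_one, ← EReal.coe_neg, EReal.coe_le_coe_iff]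
  linarith [neg_abs_le K]

/-- The envelope `φ ↦ S_x(φ)` on continuous functions. It is given real values because it is
finite there as soon as `S_x(-𝟙) > -∞`. -/
def edwardsFunctional (F : Set (X → EReal)) (x : X) (φ : C(X, ℝ)) : ℝ :=
  (edwardsS F x fun y => (φ y : EReal)).toReal

variable [CompactSpace X]

theorem coe_edwardsFunctional (hF : IsEdwardsCone F)
    (hx : ⊥ < edwardsS F x fun _ => (-1 : EReal)) (φ : C(X, ℝ)) :
    (edwardsFunctional F x φ : EReal) = edwardsS F x fun y => (φ y : EReal) := by
  obtain ⟨K, hK⟩ := (isCompact_range φ.continuous).bddBelow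
  exact EReal.coe_toReal (ne_top_of_le_ne_top (EReal.coe_ne_top _) edwardsS_le_apply)
    (bot_lt_edwardsS hF hx fun y => EReal.coe_le_coe_iff.2 (hK (mem_range_self y))).ne'

theorem isSuperlinear_edwardsFunctional (hF : IsEdwardsCone F)
    (hx : ⊥ < edwardsS F x fun _ => (-1 : EReal)) : IsSuperlinear (edwardsFunctional F x) where
  map_smul c hc φ := by
    rw [← EReal.coe_eq_coe_iff, EReal.coe_mul, coe_edwardsFunctional hF hx,
      coe_edwardsFunctional hF hx, ← edwardsS_const_mul hF hc]
    simp
  add_le_map_add φ ψ := by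
    rw [← EReal.coe_le_coe_iff, EReal.coe_add, coe_edwardsFunctional hF hx,
      coe_edwardsFunctional hF hx, coe_edwardsFunctional hF hx]
    simpa using edwardsS_add_edwardsS_le hF (x := x) (g := fun y => (φ y : EReal))
      (h := fun y => (ψ y : EReal))

theorem edwardsFunctional_nonneg (hF : IsEdwardsCone F)
    (hx : ⊥ < edwardsS F x fun _ => (-1 : EReal)) {φ : C(X, ℝ)} (hφ : 0 ≤ φ) :
    0 ≤ edwardsFunctional F x φ := by
  rw [← (isSuperlinear_edwardsFunctional hF hx).map_zero, ← EReal.coe_le_coe_iff,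
    coe_edwardsFunctional hF hx, coe_edwardsFunctional hF hx]
  exact edwardsS_mono fun y => EReal.coe_le_coe_iff.2 (hφ y)

theorem exists_linearMap_of_edwardsS_le (hF : IsEdwardsCone F)
    (hx : ⊥ < edwardsS F x fun _ => (-1 : EReal)) {K s : ℝ} (hK : ∀ y, (K : EReal) ≤ g y)
    (hs : edwardsS F x g ≤ s) :
    ∃ Λ : C(X, ℝ) →ₗ[ℝ] ℝ, (∀ φ, edwardsFunctional F x φ ≤ Λ φ) ∧
      ∀ φ : C(X, ℝ), (∀ y, (φ y : EReal) ≤ g y) → Λ φ ≤ s := by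
  refine (isSuperlinear_edwardsFunctional hF hx).exists_linearMap_ge_of_forall_le
    (convex_setOf_continuousMap_le g) ⟨.const X K, hK⟩ fun φ hφ => ?_
  rw [← EReal.coe_le_coe_iff, coe_edwardsFunctional hF hx]
  exact (edwardsS_mono hφ).trans hs

end Envelope

section Duality

variable {X : Type*} [MeasurableSpace X] {F : Set (X → EReal)} {x : X} {g : X → EReal}

theorem edwardsS_le_edwardsI : edwardsS F x g ≤ edwardsI F x g :=
  edwardsS_le_iff.2 fun u hu hug => le_sInf fun _ ⟨_, hμ, ht⟩ =>
    ((hμ u hu).trans (erealIntegral_mono hug)).trans_eq ht.symm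

theorem edwardsI_le_sInf_edwardsC :
    edwardsI F x g ≤ sInf { t : EReal | ∃ μ ∈ edwardsC F x, t = erealIntegral μ g } :=
  sInf_le_sInf fun _ ⟨μ, hμ, ht⟩ => ⟨μ, hμ.1, ht⟩

variable [TopologicalSpace X] [T2Space X] [CompactSpace X] [BorelSpace X]

theorem mem_edwardsM_of_edwardsS_le_integral (hF : IsEdwardsCone F) {μ : Measure X}
    [IsFiniteMeasure μ] [μ.WeaklyRegular]
    (hμ : ∀ φ : C(X, ℝ), (edwardsS F x fun y => (φ y : EReal)) ≤ ((∫ y, φ y ∂μ : ℝ) : EReal)) :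
    μ ∈ edwardsM F x := by
  intro u hu
  obtain ⟨K, hK⟩ := hF.exists_forall_le hu
  have hK' : ∀ y, ((-K : ℝ) : EReal) ≤ -u y := fun y => by simpa using hK y
  have hlsc : LowerSemicontinuous fun y => -u y :=
    continuous_neg.comp_upperSemicontinuous_antitone (hF.upperSemicontinuous hu)
      fun _ _ h => EReal.neg_le_neg_iff.2 h
  have hle : erealIntegral μ (fun y => -u y) ≤ -u x := by
    refine erealIntegral_le_of_forall_continuousMap_le hlsc hK' fun φ hφ => ?_
    have hux : u x ≤ ((∫ y, (-φ) y ∂μ : ℝ) : EReal) :=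
      (le_edwardsS hu fun y => by simpa using EReal.le_neg_of_le_neg (hφ y)).trans (hμ (-φ))
    refine EReal.le_neg_of_le_neg (hux.trans_eq ?_)
    simp [integral_neg]
  have hneg := erealIntegral_neg (lintegral_toENNReal_neg_ne_top (μ := μ) hK')
  simp only [neg_neg] at hneg
  rw [hneg]
  exact EReal.le_neg_of_le_neg hle

theorem mem_edwardsC_of_edwardsS_le_integral (hF : IsEdwardsCone F) {μ : Measure X}
    [IsFiniteMeasure μ] [μ.WeaklyRegular]
    (hμ : ∀ φ : C(X, ℝ), (edwardsS F x fun y => (φ y : EReal)) ≤ ((∫ y, φ y ∂μ : ℝ) : EReal)) :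
    μ ∈ edwardsC F x := by
  refine ⟨mem_edwardsM_of_edwardsS_le_integral hF hμ, EReal.le_neg_of_le_neg ?_⟩
  refine (hμ (.const X (-1))).trans_eq ?_
  rw [← EReal.coe_ennreal_toReal (measure_ne_top _ _), ← EReal.coe_neg]
  simp [Measure.real]

theorem exists_mem_edwardsC_erealIntegral_le (hF : IsEdwardsCone F) (hg : LowerSemicontinuous g)
    {K : ℝ} (hK : ∀ y, (K : EReal) ≤ g y) (hx : ⊥ < edwardsS F x fun _ => (-1 : EReal)) {s : ℝ}
    (hs : edwardsS F x g ≤ s) : ∃ μ ∈ edwardsC F x, erealIntegral μ g ≤ s := by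
  obtain ⟨Λ, hΛS, hΛs⟩ := exists_linearMap_of_edwardsS_le hF hx hK hs
  obtain ⟨μ, _, _, hμ⟩ := exists_regular_measure_integral_eq Λ fun φ hφ =>
    (edwardsFunctional_nonneg hF hx hφ).trans (hΛS φ)
  refine ⟨μ, mem_edwardsC_of_edwardsS_le_integral hF fun φ => ?_,
    erealIntegral_le_of_forall_continuousMap_le hg hK fun φ hφ => ?_⟩
  · rw [← coe_edwardsFunctional hF hx, hμ]
    exact EReal.coe_le_coe_iff.2 (hΛS φ)
  · rw [hμ]
    exact EReal.coe_le_coe_iff.2 (hΛs φ hφ)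

end Duality

theorem edwards_generalized_general {X : Type*} [TopologicalSpace X] [T2Space X] [CompactSpace X]
    [MeasurableSpace X] [BorelSpace X] {F : Set (X → EReal)} (hF : IsEdwardsCone F)
    {g : X → EReal} (hg : LowerSemicontinuous g) (hgb : ∃ K : ℝ, ∀ y, (K : EReal) ≤ g y)
    {x : X} (hx : ⊥ < edwardsS F x (fun _ => (-1 : EReal))) :
    edwardsS F x g = edwardsI F x g ∧
    edwardsS F x g = sInf { t : EReal | ∃ μ ∈ edwardsC F x, t = erealIntegral μ g } := by
  obtain ⟨K, hK⟩ := hgb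
  have hCS : sInf { t : EReal | ∃ μ ∈ edwardsC F x, t = erealIntegral μ g } ≤ edwardsS F x g := by
    refine EReal.le_of_forall_lt_iff_le.1 fun s hs => ?_
    obtain ⟨μ, hμ, hle⟩ := exists_mem_edwardsC_erealIntegral_le hF hg hK hx hs.le
    exact sInf_le_of_le ⟨μ, hμ, rfl⟩ hle
  exact ⟨edwardsS_le_edwardsI.antisymm (edwardsI_le_sInf_edwardsC.trans hCS),
    (edwardsS_le_edwardsI.trans edwardsI_le_sInf_edwardsC).antisymm hCS⟩

/-- Generalized Edwards theorem: for `g : X → (-∞, ∞]` lower semicontinuous and bounded from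
below, and any `x ∈ X` with `S_x(-𝟙) > -∞`, one has `S_x(g) = I_x(g)`, and it suffices to
take the infimum over measures in `C_x^F`. -/
theorem edwards_generalized {X : Type*} [MetricSpace X] [CompactSpace X]
    [MeasurableSpace X] [BorelSpace X] (F : Set (X → EReal)) (hF : IsEdwardsCone F)
    (g : X → EReal) (hg : LowerSemicontinuous g) (hgb : ∃ K : ℝ, ∀ y, (K : EReal) ≤ g y)
    (x : X) (hx : ⊥ < edwardsS F x (fun _ => (-1 : EReal))) :
    edwardsS F x g = edwardsI F x g ∧
    edwardsS F x g = sInf { t : EReal | ∃ μ ∈ edwardsC F x, t = erealIntegral μ g } :=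
  edwards_generalized_general hF hg hgb hx

end
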